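/- Let c ∈ ℤ_2^× with c ≠ 1 and c ≠ −1. If m, n ≥ 1 and i ≥ 1 are integers with m ≡ n modulo 2^i, then (1 − c^m)(1 − 2^{m−1})·B_m/m − (1 − c^n)(1 − 2^{n−1})·B_n/n lies in 2^{i+2}·ℤ_2. -/

import Mathlib

/-!
For a unit residue class `a` modulo `p ^ N` write `c a = {c a} + p ^ N [c a / p ^ N]` with
`0 ≤ {c a} < p ^ N`. Since `a ↦ {c a}` permutes the unit classes, raising this to the power `m`,
expanding modulo `p ^ (2 N)` and summing over `a` gives Voronoi's congruence
`(c ^ m - 1) ∑ a ^ m ≡ m p ^ N ∑ [c a / p ^ N] {c a} ^ (m - 1)`.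
After division by `m p ^ N` the left side tends to `(c ^ m - 1) (1 - p ^ (m - 1)) B_m / m` by
Faulhaber's formula, while the right side becomes a Riemann sum with `p`-adically integral
coefficients. If `m ≡ n` modulo the exponent of `(ℤ / p ^ r)ˣ`, the Riemann sums for `m` and `n`
are congruent modulo `p ^ r` term by term, and the closed set `p ^ r ℤ_p` contains the limit of
their differences. At `p = 2`, `r = i + 2` that exponent is `2 ^ i`.
-/

open Filter Finset Topology

section PowerSums

variable {K : Type*} [Field K] [CharZero K]

theorem sum_range_pow_div (m : ℕ) {n : ℕ} (hn : n ≠ 0) :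
    (∑ a ∈ range n, (a : K) ^ m) / n =
      ∑ i ∈ range (m + 1), (bernoulli i : K) * (m + 1).choose i * (n : K) ^ (m - i) / (m + 1) := by
  have faulhaber := congrArg ((↑) : ℚ → K) (sum_range_pow n m)
  push_cast at faulhaber
  rw [faulhaber, sum_div]
  refine sum_congr rfl fun i hi ↦ ?_
  rw [Nat.sub_add_comm (mem_range_succ_iff.1 hi), pow_succ]
  have hnK : (n : K) ≠ 0 := mod_cast hn
  field_simp

theorem tendsto_sum_range_pow_div_bernoulli [TopologicalSpace K] [IsTopologicalSemiring K]
    {ι : Type*} {l : Filter ι} {n : ι → ℕ} (hn : ∀ᶠ j in l, n j ≠ 0)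
    (hlim : Tendsto (fun j ↦ (n j : K)) l (𝓝 0)) (m : ℕ) :
    Tendsto (fun j ↦ (∑ a ∈ range (n j), (a : K) ^ m) / n j) l (𝓝 (bernoulli m : K)) := by
  let P : K → K := fun x ↦
    ∑ i ∈ range (m + 1), (bernoulli i : K) * (m + 1).choose i * x ^ (m - i) / (m + 1)
  have hP : Continuous P := by fun_prop
  have hP0 : P 0 = bernoulli m := by
    have hm : (m + 1 : K) ≠ 0 := m.cast_add_one_ne_zero
    have hlow : ∑ i ∈ range m,
        (bernoulli i : K) * (m + 1).choose i * 0 ^ (m - i) / (m + 1) = 0 :=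
      sum_eq_zero fun i hi ↦ by
        rw [zero_pow (Nat.sub_ne_zero_of_lt (mem_range.1 hi)), mul_zero, zero_div]
    simp [P, sum_range_succ, hlow, hm]
  have hPn : Tendsto (fun j ↦ P (n j)) l (𝓝 (bernoulli m : K)) := hP0 ▸ (hP.tendsto 0).comp hlim
  exact hPn.congr' (hn.mono fun _ hj ↦ (sum_range_pow_div m hj).symm)

end PowerSums

section Units

variable {M : Type*} [AddCommMonoid M]

theorem sum_range_mul_with_dvd {d : ℕ} (hd : d ≠ 0) (n : ℕ) (f : ℕ → M) :
    ∑ a ∈ range (d * n) with d ∣ a, f a = ∑ b ∈ range n, f (d * b) := by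
  refine (sum_nbij (d * ·) ?_ (fun _ _ _ _ ↦ Nat.eq_of_mul_eq_mul_left (by positivity)) ?_
    fun _ _ ↦ rfl).symm
  · intro b hb
    simpa [Nat.pos_of_ne_zero hd] using hb
  · intro a ha
    obtain ⟨hlt, b, rfl⟩ := mem_filter.1 ha
    exact ⟨b, by simpa [Nat.pos_of_ne_zero hd] using hlt, rfl⟩

theorem sum_units_zmod_val (n : ℕ) [NeZero n] (f : ℕ → M) :
    ∑ a : (ZMod n)ˣ, f a.val.val = ∑ a ∈ range n with a.Coprime n, f a :=
  sum_bij' (fun a _ ↦ a.val.val) (fun a ha ↦ ZMod.unitOfCoprime a (mem_filter.1 ha).2)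
    (fun a _ ↦ mem_filter.2 ⟨mem_range.2 (ZMod.val_lt _), ZMod.val_coe_unit_coprime a⟩)
    (fun _ _ ↦ mem_univ _)
    (fun a _ ↦ Units.ext (by simp))
    (fun a ha ↦ by simp [Nat.mod_eq_of_lt (mem_range.1 (mem_filter.1 ha).1)])
    (fun _ _ ↦ rfl)

end Units

theorem pow_modEq_pow_of_modEq_carmichael {n x k l : ℕ} (hx : x.Coprime n)
    (h : k ≡ l [MOD ArithmeticFunction.carmichael n]) : x ^ k ≡ x ^ l [MOD n] := by
  have hunit := pow_eq_pow_of_modEq h (ArithmeticFunction.pow_carmichael (ZMod.unitOfCoprime x hx))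
  rw [← ZMod.natCast_eq_natCast_iff]
  simpa using congrArg Units.val hunit

section MazurMeasure

variable {p : ℕ} [Fact p.Prime]

theorem sum_units_zmod_prime_pow_val {M : Type*} [AddCommGroup M] (N : ℕ) (f : ℕ → M) :
    ∑ a : (ZMod (p ^ (N + 1)))ˣ, f a.val.val =
      ∑ a ∈ range (p ^ (N + 1)), f a - ∑ b ∈ range (p ^ N), f (p * b) := by
  have hp : p.Prime := Fact.out
  have hcop (a : ℕ) : a.Coprime (p ^ (N + 1)) ↔ ¬ p ∣ a := by
    rw [Nat.coprime_pow_right_iff N.succ_pos, Nat.coprime_comm, hp.coprime_iff_not_dvd]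
  rw [sum_units_zmod_val, eq_sub_iff_add_eq', ← sum_range_mul_with_dvd hp.ne_zero, ← pow_succ',
    filter_congr fun a _ ↦ hcop a, sum_filter_add_sum_filter_not]

theorem tendsto_padic_prime_pow_nhds_zero : Tendsto (fun N : ℕ ↦ (p : ℚ_[p]) ^ N) atTop (𝓝 0) :=
  tendsto_pow_atTop_nhds_zero_of_norm_lt_one Padic.norm_p_lt_one

theorem tendsto_sum_units_pow_div {m : ℕ} (hm : m ≠ 0) :
    Tendsto (fun N ↦ (∑ a : (ZMod (p ^ (N + 1)))ˣ, (a.val.val : ℚ_[p]) ^ m) / p ^ (N + 1)) atTop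
      (𝓝 ((1 - p ^ (m - 1)) * bernoulli m)) := by
  have hp : (p : ℚ_[p]) ≠ 0 := NeZero.ne _
  have hall : Tendsto (fun N ↦ (∑ a ∈ range (p ^ N), (a : ℚ_[p]) ^ m) / p ^ N) atTop
      (𝓝 (bernoulli m : ℚ_[p])) := by
    have h := tendsto_sum_range_pow_div_bernoulli (n := (p ^ ·)) (.of_forall fun N ↦ NeZero.ne _)
      (by simpa using tendsto_padic_prime_pow_nhds_zero (p := p)) m
    simpa using h
  have hunits := (hall.comp (tendsto_add_atTop_nat 1)).sub (hall.const_mul ((p : ℚ_[p]) ^ (m - 1)))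
  rw [sub_mul, one_mul]
  refine hunits.congr fun N ↦ ?_
  obtain ⟨k, rfl⟩ := Nat.exists_eq_succ_of_ne_zero hm
  rw [sum_units_zmod_prime_pow_val N fun a ↦ (a : ℚ_[p]) ^ (k + 1)]
  simp only [Nat.cast_mul, mul_pow, ← mul_sum, Function.comp_apply, Nat.succ_eq_add_one,
    Nat.add_sub_cancel]
  field_simp
  ring

/-- Multiplication by `c` on the unit residue classes modulo `p ^ N`; its value at `a` is the class
written `{c a}` in the theory of Bernoulli distributions. -/
noncomputable def residuePerm (c : ℤ_[p]ˣ) (N : ℕ) : Equiv.Perm (ZMod (p ^ N))ˣ :=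
  Equiv.mulLeft (Units.map (PadicInt.toZModPow (p := p) N).toMonoidHom c)

theorem pow_dvd_mul_sub_residuePerm (c : ℤ_[p]ˣ) {N : ℕ} (a : (ZMod (p ^ N))ˣ) :
    (p : ℤ_[p]) ^ N ∣ c * a.val.val - (residuePerm c N a).val.val := by
  rw [← Ideal.mem_span_singleton, ← PadicInt.ker_toZModPow, RingHom.mem_ker]
  simp [residuePerm]

/-- The `p`-adic integer `[c a / p ^ N]`, the quotient of `c a - {c a}` by `p ^ N`, where a residue
class stands for its least natural representative. It encodes Mazur's regularized Bernoulli measure,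
whose mass on `a + p ^ N ℤ_p` is `c⁻¹ * carry c a + (c⁻¹ - 1) / 2`. -/
noncomputable def carry (c : ℤ_[p]ˣ) {N : ℕ} (a : (ZMod (p ^ N))ˣ) : ℤ_[p] :=
  (pow_dvd_mul_sub_residuePerm c a).choose

theorem residuePerm_add_carry (c : ℤ_[p]ˣ) {N : ℕ} (a : (ZMod (p ^ N))ˣ) :
    (residuePerm c N a).val.val + p ^ N * carry c a = c * (a.val.val : ℤ_[p]) := by
  rw [carry, ← (pow_dvd_mul_sub_residuePerm c a).choose_spec, add_sub_cancel]

/-- The level-`N` Riemann sum of `x ↦ x ^ k` over `ℤ_pˣ` against the carries, with the class of `a`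
sampled at `{c a}` rather than at `a`. -/
noncomputable def carryMoment (c : ℤ_[p]ˣ) (N k : ℕ) : ℤ_[p] :=
  ∑ a : (ZMod (p ^ N))ˣ, carry c a * (residuePerm c N a).val.val ^ k

theorem voronoi_congruence (c : ℤ_[p]ˣ) (N m : ℕ) : ∃ w : ℤ_[p],
    (c ^ m - 1) * ∑ a : (ZMod (p ^ N))ˣ, (a.val.val : ℤ_[p]) ^ m =
      p ^ N * (m * carryMoment c N (m - 1) + p ^ N * w) := by
  have hterm (a : (ZMod (p ^ N))ˣ) : ∃ w : ℤ_[p],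
      (c : ℤ_[p]) ^ m * (a.val.val : ℤ_[p]) ^ m = (residuePerm c N a).val.val ^ m +
        p ^ N * (m * (carry c a * (residuePerm c N a).val.val ^ (m - 1)) + p ^ N * w) := by
    obtain ⟨k, hk⟩ := Polynomial.powAddExpansion
      ((residuePerm c N a).val.val : ℤ_[p]) (p ^ N * carry c a) m
    refine ⟨k * carry c a ^ 2, ?_⟩
    rw [← mul_pow, ← residuePerm_add_carry, hk]
    ring
  choose w hw using hterm
  have hperm := Equiv.sum_comp (residuePerm c N) fun a : (ZMod (p ^ N))ˣ ↦ (a.val.val : ℤ_[p]) ^ m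
  refine ⟨∑ a, w a, ?_⟩
  rw [sub_mul, one_mul, mul_sum, sum_congr rfl fun a _ ↦ hw a, sum_add_distrib, hperm,
    add_sub_cancel_left, ← mul_sum, sum_add_distrib, ← mul_sum, ← mul_sum, carryMoment]

theorem tendsto_carryMoment (c : ℤ_[p]ˣ) {m : ℕ} (hm : m ≠ 0) :
    Tendsto (fun N ↦ (carryMoment c (N + 1) (m - 1) : ℚ_[p])) atTop
      (𝓝 (((c : ℤ_[p]) ^ m - 1) * ((1 - p ^ (m - 1)) * (bernoulli m / m)))) := by
  choose w hw using fun N ↦ voronoi_congruence c (N + 1) m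
  have herr : Tendsto (fun N ↦ (p : ℚ_[p]) ^ (N + 1) * w N) atTop (𝓝 0) :=
    (tendsto_padic_prime_pow_nhds_zero.comp (tendsto_add_atTop_nat 1)).zero_mul_isBoundedUnder_le
      (isBoundedUnder_of ⟨1, fun N ↦ (w N).norm_le_one⟩)
  have hlim := (((tendsto_sum_units_pow_div hm).const_mul
    ((c : ℤ_[p]) ^ m - 1 : ℚ_[p])).sub herr).div_const (m : ℚ_[p])
  convert hlim using 2 with N
  · have hm0 : (m : ℚ_[p]) ≠ 0 := mod_cast hm
    have hp : (p : ℚ_[p]) ≠ 0 := NeZero.ne _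
    have h := congrArg ((↑) : ℤ_[p] → ℚ_[p]) (hw N)
    push_cast [PadicInt.coe_sum] at h
    rw [← mul_div_assoc, h]
    field_simp
    ring
  · ring

theorem pow_dvd_carryMoment_sub (c : ℤ_[p]ˣ) {N k l r : ℕ} (hN : N ≠ 0)
    (h : k ≡ l [MOD ArithmeticFunction.carmichael (p ^ r)]) :
    (p : ℤ_[p]) ^ r ∣ carryMoment c N k - carryMoment c N l := by
  simp only [carryMoment, ← sum_sub_distrib, ← mul_sub]
  refine dvd_sum fun a _ ↦ Dvd.dvd.mul_left ?_ _
  have hcop : (residuePerm c N a).val.val.Coprime (p ^ r) :=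
    ((Nat.coprime_pow_right_iff (Nat.pos_of_ne_zero hN) _ _).1
      (ZMod.val_coe_unit_coprime _)).pow_right r
  have hdvd := Nat.modEq_iff_dvd.1 (pow_modEq_pow_of_modEq_carmichael hcop h.symm)
  simpa using map_dvd (Int.castRingHom ℤ_[p]) hdvd

theorem regularized_kummer_congruence_two_general (c : ℤ_[p]ˣ) {m n r : ℕ}
    (hm : m ≠ 0) (hn : n ≠ 0) (hmn : m ≡ n [MOD ArithmeticFunction.carmichael (p ^ r)]) :
    ∃ y : ℤ_[p],
      (1 - (c : ℤ_[p]) ^ m : ℚ_[p]) * ((1 - p ^ (m - 1)) * (bernoulli m / m)) -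
        (1 - (c : ℤ_[p]) ^ n : ℚ_[p]) * ((1 - p ^ (n - 1)) * (bernoulli n / n)) = p ^ r * y := by
  have hclosed : IsClosed (Set.range fun y : ℤ_[p] ↦ (p : ℚ_[p]) ^ r * y) :=
    (isCompact_range (by fun_prop)).isClosed
  have hpred : m - 1 ≡ n - 1 [MOD ArithmeticFunction.carmichael (p ^ r)] :=
    Nat.ModEq.add_right_cancel' 1 (by rwa [Nat.sub_one_add_one hm, Nat.sub_one_add_one hn])
  have hmem (N : ℕ) : (carryMoment c (N + 1) (n - 1) - carryMoment c (N + 1) (m - 1) : ℚ_[p]) ∈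
      Set.range fun y : ℤ_[p] ↦ (p : ℚ_[p]) ^ r * y := by
    obtain ⟨y, hy⟩ := pow_dvd_carryMoment_sub c N.succ_ne_zero hpred.symm
    exact ⟨y, by simpa using congrArg ((↑) : ℤ_[p] → ℚ_[p]) hy.symm⟩
  have hlim := (tendsto_carryMoment c hn).sub (tendsto_carryMoment c hm)
  obtain ⟨y, hy⟩ := hclosed.mem_of_tendsto hlim (Eventually.of_forall hmem)
  exact ⟨y, by linear_combination -hy⟩

end MazurMeasure

/-- regularized Kümmer congruences at `p = 2`.  If `c ∈ ℤ_2^×`, `c ≠ ±1`,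
and `m ≡ n (mod 2ⁱ)` with `m, n ≥ 1` and `i ≥ 1`, then
`(1 − cᵐ)(1 − 2^{m−1})·B_m/m − (1 − cⁿ)(1 − 2^{n−1})·B_n/n ∈ 2^{i+2}·ℤ_2`. -/
theorem regularized_kummer_congruence_two (c : ℤ_[2]ˣ)
    (hc1 : (c : ℤ_[2]) ≠ 1) (hc2 : (c : ℤ_[2]) ≠ -1)
    (m n : ℕ) (hm : 1 ≤ m) (hn : 1 ≤ n) (i : ℕ) (hi : 1 ≤ i)
    (hmn : m ≡ n [MOD 2 ^ i]) :
    ∃ y : ℤ_[2],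
      ((1 - (c : ℤ_[2]) ^ m : ℤ_[2]) : ℚ_[2]) *
          ((((1 - (2 : ℚ) ^ (m - 1)) * (bernoulli m / (m : ℚ))) : ℚ) : ℚ_[2]) -
        ((1 - (c : ℤ_[2]) ^ n : ℤ_[2]) : ℚ_[2]) *
          ((((1 - (2 : ℚ) ^ (n - 1)) * (bernoulli n / (n : ℚ))) : ℚ) : ℚ_[2]) =
      (2 : ℚ_[2]) ^ (i + 2) * (y : ℚ_[2]) := by
  have hcarmichael : ArithmeticFunction.carmichael (2 ^ (i + 2)) = 2 ^ i :=
    ArithmeticFunction.carmichael_two_pow_of_ne_two (by lia)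
  simpa using regularized_kummer_congruence_two_general c (by lia) (by lia) (hcarmichael ▸ hmn)
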